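/- Let n ≥ 3 and let H be a group containing Aut(F_n), i.e., such that there exists an injective group homomorphism from Aut(F_n) into H. Then H is not linear: for every field K and every natural number d, there is no injective group homomorphism from H into the general linear group GL_d(K). -/

import Mathlib

/-!
A variant of the argument of Formanek and Procesi. Let `R` be a representation of `Aut(F)`, let `z`
be a letter of `F`, and for a word `g` in the other letters put `A g = R (conjugation by g)`,
`B g = R (z ↦ z g)` and `T = R (conjugation by z)`. Then every `A g` commutes with every `B h`, and
`T⁻¹ (B g) T = (A g) (B g)`.

Let `l` be a homomorphism from the multiplicative group of the field to `ℚ`, and compare the sums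
of `l(x) ^ 2` over the eigenvalues `x` of `B g` and of `(A g) (B g)`. For `g` in the commutator
subgroup the restriction of `A g` to each generalized eigenspace of `B g` has determinant `1`, so
the cross terms vanish and `l` is zero on the eigenvalues of `A g`. As `l` is arbitrary, these
eigenvalues are roots of unity.

A free group with a faithful representation all of whose eigenvalues are roots of unity is
commutative, which the commutator subgroup of a free group of rank at least two is not. In
characteristic `p` its elements have finite order. In characteristic `0` every element has a
unipotent power; if `u` is unipotent, then `tr (u ^ k s)` is polynomial in `k` and bounded, hence
constant, so by Kolchin's theorem any two unipotent elements generate a nilpotent group, and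
nilpotent subgroups of a free group are commutative.
-/

namespace FormanekProcesi

open Module Polynomial Function
open scoped commutatorElement

section Blocks

lemma charpoly_blockDiagonal' {R ι : Type*} [CommRing R] [Fintype ι] [DecidableEq ι]
    {κ : ι → Type*} [∀ i, Fintype (κ i)] [∀ i, DecidableEq (κ i)]
    (M : ∀ i, Matrix (κ i) (κ i) R) :
    (Matrix.blockDiagonal' M).charpoly = ∏ i, (M i).charpoly := by
  let order : LinearOrder ι := LinearOrder.lift' (Fintype.equivFin ι) (Equiv.injective _)
  obtain rfl : ‹DecidableEq ι› = order.toDecidableEq := Subsingleton.elim _ _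
  rw [Matrix.charpoly, (Matrix.blockTriangular_blockDiagonal' M).charmatrix.det_fintype]
  refine Finset.prod_congr rfl fun i _ ↦ ?_
  rw [← Matrix.charmatrix_toSquareBlock, ← Matrix.charpoly,
    ← Matrix.charpoly_reindex (Equiv.sigmaSubtype i)]
  congr 1
  ext j k
  exact Matrix.blockDiagonal'_apply_eq M i j k

lemma charpoly_eq_prod_charpoly_restrict {R M ι : Type*} [CommRing R] [AddCommGroup M] [Module R M]
    [Module.Finite R M] [Module.Free R M] [Fintype ι] [DecidableEq ι] {N : ι → Submodule R M}
    [∀ i, Module.Finite R (N i)] [∀ i, Module.Free R (N i)] (hN : DirectSum.IsInternal N)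
    {T : End R M} (hT : ∀ i, Set.MapsTo T (N i) (N i)) :
    T.charpoly = ∏ i, (T.restrict (hT i)).charpoly := by
  let b (i : ι) := Module.Free.chooseBasis R (N i)
  rw [← LinearMap.charpoly_toMatrix T (hN.collectedBasis b),
    LinearMap.toMatrix_directSum_collectedBasis_eq_blockDiagonal' hN hN b b hT,
    charpoly_blockDiagonal']
  simp only [LinearMap.charpoly_toMatrix]

end Blocks

section CommutingRoots

variable {E V : Type*} [Field E] [AddCommGroup V] [Module E V]

lemma maxGenEigenspace_le_maxGenEigenspace_add {S N : End E V} (h : Commute S N)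
    (hN : IsNilpotent N) (μ : E) : S.maxGenEigenspace μ ≤ (S + N).maxGenEigenspace μ := by
  intro x hx
  have hx0 : x ∈ N.maxGenEigenspace 0 := by
    obtain ⟨k, hk⟩ := hN
    exact End.mem_maxGenEigenspace _ _ _ |>.2 ⟨k, by simp [hk]⟩
  simpa using End.genEigenspace_inf_le_add S N μ 0 ⊤ ⊤ h ⟨hx, hx0⟩

lemma maxGenEigenspace_add {S N : End E V} (h : Commute S N) (hN : IsNilpotent N) (μ : E) :
    (S + N).maxGenEigenspace μ = S.maxGenEigenspace μ := by
  refine le_antisymm ?_ (maxGenEigenspace_le_maxGenEigenspace_add h hN μ)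
  simpa using maxGenEigenspace_le_maxGenEigenspace_add (h.add_left (.refl N)).neg_right hN.neg μ

lemma maxGenEigenspace_smul (S : End E V) {b : E} (hb : b ≠ 0) (μ : E) :
    (b • S).maxGenEigenspace (b * μ) = S.maxGenEigenspace μ := by
  refine le_antisymm ?_ (End.genEigenspace_le_smul S μ b ⊤)
  simpa [smul_smul, ← mul_assoc, hb] using
    End.genEigenspace_le_smul (b • S) (b * μ) b⁻¹ ⊤

variable [FiniteDimensional E V]

lemma roots_charpoly_mul {A B : End E V} (h : Commute A B) {b : E} (hb : b ≠ 0)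
    (hB : IsNilpotent (B - algebraMap E (End E V) b)) :
    (A * B).charpoly.roots = A.charpoly.roots.map (b * ·) := by
  classical
  set N := B - algebraMap E (End E V) b
  have hAN : Commute A N := h.sub_right (Algebra.commutes b A).symm
  have hAB : A * B = b • A + A * N := by
    rw [mul_sub, ← Algebra.commutes, ← Algebra.smul_def, add_sub_cancel]
  ext μ
  obtain ⟨ν, rfl⟩ : ∃ ν, b * ν = μ := ⟨b⁻¹ * μ, mul_inv_cancel_left₀ hb μ⟩
  rw [Multiset.count_map_eq_count' _ _ (mul_right_injective₀ hb), count_roots, count_roots,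
    ← LinearMap.finrank_maxGenEigenspace_eq, ← LinearMap.finrank_maxGenEigenspace_eq, hAB,
    maxGenEigenspace_add (((Commute.refl A).mul_right hAN).smul_left b)
      (hAN.isNilpotent_mul_left hB), maxGenEigenspace_smul A hb]

lemma roots_charpoly_eq_replicate {B : End E V} {b : E} (hb : b ≠ 0)
    (hB : IsNilpotent (B - algebraMap E (End E V) b)) :
    B.charpoly.roots = Multiset.replicate (finrank E V) b := by
  have hone : (1 : End E V).charpoly.roots = Multiset.replicate (finrank E V) 1 := by
    rw [LinearMap.charpoly_one, roots_pow, ← C_1, roots_X_sub_C, Multiset.nsmul_singleton]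
  simpa [hone] using roots_charpoly_mul (.one_left B) hb hB

variable [IsAlgClosed E]

lemma card_roots_charpoly (T : End E V) : T.charpoly.roots.card = finrank E V := by
  rw [← LinearMap.charpoly_natDegree T, splits_iff_card_roots.1 (IsAlgClosed.splits _)]

lemma prod_roots_charpoly (T : End E V) : T.charpoly.roots.prod = LinearMap.det T :=
  (End.det_eq_prod_roots_charpoly_of_splits (IsAlgClosed.splits _)).symm

end CommutingRoots

section SecondMoment

variable {E : Type*} [Field E]

/-- A logarithm on the field `E`: a homomorphism from the multiplicative group of `E` to `ℚ`,
extended to `0` by an arbitrary value. -/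
def IsLogarithm (l : E → ℚ) : Prop :=
  ∀ ⦃a b : E⦄, a ≠ 0 → b ≠ 0 → l (a * b) = l a + l b

lemma IsLogarithm.map_one {l : E → ℚ} (hl : IsLogarithm l) : l 1 = 0 := by
  simpa using hl one_ne_zero one_ne_zero

lemma IsLogarithm.map_multiset_prod {l : E → ℚ} (hl : IsLogarithm l) {s : Multiset E}
    (hs : 0 ∉ s) : l s.prod = (s.map l).sum := by
  induction s using Multiset.induction_on with
  | empty => simp [hl.map_one]
  | cons a s ih =>
    obtain ⟨ha, hs⟩ : a ≠ 0 ∧ 0 ∉ s := by simpa [eq_comm] using hs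
    rw [Multiset.prod_cons, hl ha (Multiset.prod_ne_zero hs), ih hs, Multiset.map_cons,
      Multiset.sum_cons]

lemma exists_addMonoidHom_rat_ne_zero {M : Type*} [AddCommGroup M] {a : M}
    (ha : ¬ IsOfFinAddOrder a) : ∃ l : M →+ ℚ, l a ≠ 0 := by
  obtain ⟨l, hl⟩ := (Module.Baer.of_divisible ℚ).extension_property_addMonoidHom
    (zmultiplesHom M a) (injective_zsmul_iff_not_isOfFinAddOrder.2 ha) (Int.castAddHom ℚ)
  have hla : l a = 1 := by simpa using congr($hl 1)
  exact ⟨l, hla ▸ one_ne_zero⟩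

lemma exists_isLogarithm_ne_zero {x : E} (hx0 : x ≠ 0) (hx : ¬ IsOfFinOrder x) :
    ∃ l : E → ℚ, IsLogarithm l ∧ l x ≠ 0 := by
  classical
  obtain ⟨l, hlx⟩ := exists_addMonoidHom_rat_ne_zero (a := Additive.ofMul (Units.mk0 x hx0))
    (by rwa [isOfFinAddOrder_ofMul_iff, ← Units.isOfFinOrder_val])
  refine ⟨fun y ↦ if hy : y = 0 then 0 else l (.ofMul (Units.mk0 y hy)), fun a b ha hb ↦ ?_, ?_⟩
  · simp [ha, hb, Units.mk0_mul]
  · simpa [hx0] using hlx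

variable {V : Type*} [AddCommGroup V] [Module E V] [FiniteDimensional E V]

/-- The second moment of the logarithms of the eigenvalues of `T`, counted with algebraic
multiplicity. -/
noncomputable def secondMoment (l : E → ℚ) (T : End E V) : ℚ :=
  (T.charpoly.roots.map (l · ^ 2)).sum

lemma eq_zero_of_secondMoment_eq_zero {l : E → ℚ} {T : End E V} (hT : secondMoment l T = 0)
    {x : E} (hx : x ∈ T.charpoly.roots) : l x = 0 := by
  have hnonneg : ∀ y ∈ T.charpoly.roots.map (l · ^ 2), 0 ≤ y := by
    simp only [Multiset.mem_map, forall_exists_index, and_imp, forall_apply_eq_imp_iff₂]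
    exact fun y _ ↦ sq_nonneg (l y)
  exact pow_eq_zero_iff two_ne_zero |>.1 <|
    Multiset.all_zero_of_le_zero_le_of_sum_eq_zero hnonneg hT _ (Multiset.mem_map_of_mem _ hx)

lemma secondMoment_eq_sum_restrict {ι : Type*} [Fintype ι] [DecidableEq ι]
    {N : ι → Submodule E V} (hN : DirectSum.IsInternal N) (l : E → ℚ) {T : End E V}
    (hT : ∀ i, Set.MapsTo T (N i) (N i)) :
    secondMoment l T = ∑ i, secondMoment l (T.restrict (hT i)) := by
  simp only [secondMoment, charpoly_eq_prod_charpoly_restrict hN hT]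
  rw [roots_prod _ _ (Finset.prod_ne_zero_iff.2 fun i _ ↦ (LinearMap.charpoly_monic _).ne_zero),
    Multiset.map_bind, Multiset.sum_bind]
  rfl

variable [IsAlgClosed E]

-- The cross term `2 (log b) (∑ log x)` vanishes because `∑ log x = log (det A) = 0`.
lemma secondMoment_mul_of_isNilpotent {l : E → ℚ} (hl : IsLogarithm l) {A B : End E V}
    (hAB : Commute A B) (hA : LinearMap.det A = 1) {b : E} (hb : b ≠ 0)
    (hB : IsNilpotent (B - algebraMap E (End E V) b)) :
    secondMoment l (A * B) = secondMoment l A + secondMoment l B := by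
  set s := A.charpoly.roots with hs
  have hprod : s.prod = 1 := (prod_roots_charpoly A).trans hA
  have hs0 : 0 ∉ s := fun h ↦ one_ne_zero (hprod ▸ Multiset.prod_eq_zero h)
  have hsum : (s.map l).sum = 0 := by rw [← hl.map_multiset_prod hs0, hprod, hl.map_one]
  calc secondMoment l (A * B)
    _ = (s.map fun x ↦ l x ^ 2 + (2 * l b * l x + l b ^ 2)).sum := by
      rw [secondMoment, roots_charpoly_mul hAB hb hB, Multiset.map_map]
      refine congrArg _ (Multiset.map_congr rfl fun x hx ↦ ?_)
      rw [comp_apply, hl hb (ne_of_mem_of_not_mem hx hs0)]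
      ring
    _ = secondMoment l A + finrank E V * l b ^ 2 := by
      rw [Multiset.sum_map_add, Multiset.sum_map_add, Multiset.sum_map_mul_left, hsum, mul_zero,
        zero_add, Multiset.map_const', Multiset.sum_replicate, hs, card_roots_charpoly,
        nsmul_eq_mul, secondMoment]
    _ = secondMoment l A + secondMoment l B := by
      simp [secondMoment, roots_charpoly_eq_replicate hb hB]

lemma secondMoment_eq_sum_maxGenEigenspace (l : E → ℚ) (B : End E V)
    [Fintype {b // B.maxGenEigenspace b ≠ ⊥}] {T : End E V} (hT : Commute B T) :
    secondMoment l T = ∑ b : {b // B.maxGenEigenspace b ≠ ⊥},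
      secondMoment l (T.restrict (End.mapsTo_maxGenEigenspace_of_comm hT b)) := by
  classical
  have hN := DirectSum.isInternal_submodule_of_iSupIndep_of_iSup_eq_top
    B.independent_maxGenEigenspace B.iSup_maxGenEigenspace_eq_top
  exact secondMoment_eq_sum_restrict (DirectSum.isInternal_ne_bot_iff.2 hN) l _

lemma secondMoment_mul {l : E → ℚ} (hl : IsLogarithm l) {A B : End E V} (hAB : Commute A B)
    (hB : IsUnit B)
    (hA : ∀ b, LinearMap.det (A.restrict (End.mapsTo_maxGenEigenspace_of_comm hAB.symm b)) = 1) :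
    secondMoment l (A * B) = secondMoment l A + secondMoment l B := by
  have : Finite {b // B.maxGenEigenspace b ≠ ⊥} :=
    WellFoundedGT.finite_ne_bot_of_iSupIndep B.independent_maxGenEigenspace
  have := Fintype.ofFinite {b // B.maxGenEigenspace b ≠ ⊥}
  have hBAB : Commute B (A * B) := hAB.symm.mul_right (.refl B)
  rw [secondMoment_eq_sum_maxGenEigenspace l B hBAB,
    secondMoment_eq_sum_maxGenEigenspace l B hAB.symm,
    secondMoment_eq_sum_maxGenEigenspace l B (.refl B), ← Finset.sum_add_distrib]
  refine Finset.sum_congr rfl fun ⟨b, hb⟩ _ ↦ ?_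
  have hb0 : b ≠ 0 := by
    rintro rfl
    exact spectrum.zero_notMem E hB (End.HasUnifEigenvalue.lt one_pos hb).mem_spectrum
  have hmapsA := End.mapsTo_maxGenEigenspace_of_comm hAB.symm b
  have hmapsB := End.mapsTo_maxGenEigenspace_of_comm (.refl B) b
  have hrestrict : (A * B).restrict (End.mapsTo_maxGenEigenspace_of_comm hBAB b) =
      A.restrict hmapsA * B.restrict hmapsB := LinearMap.restrict_comp hmapsB hmapsA
  rw [hrestrict]
  exact secondMoment_mul_of_isNilpotent hl (LinearMap.restrict_commute hAB hmapsA hmapsB) (hA b) hb0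
    (B.isNilpotent_restrict_maxGenEigenspace_sub_algebraMap b)

end SecondMoment

section TorsionEigenvalues

variable {E V G : Type*} [Field E] [AddCommGroup V] [Module E V] [Group G]

lemma map_eq_one_of_mem_commutator {M : Type*} [CommMonoid M] (f : G →* M) {g : G}
    (hg : g ∈ commutator G) : f g = 1 :=
  congr_arg Units.val (Abelianization.commutator_subset_ker f.toHomUnits hg)

lemma det_restrict_eq_one_of_mem_commutator (A : G →* End E V) {p : Submodule E V}
    (hp : ∀ g, Set.MapsTo (A g) p p) {g : G} (hg : g ∈ commutator G) :
    LinearMap.det ((A g).restrict (hp g)) = 1 := by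
  let restr : G →* End E p :=
    { toFun g := (A g).restrict (hp g)
      map_one' := by ext; simp
      map_mul' g h := by ext x; exact congr($(map_mul A g h) x) }
  exact map_eq_one_of_mem_commutator (LinearMap.det.comp restr) hg

variable [FiniteDimensional E V] [IsAlgClosed E]

theorem isOfFinOrder_of_mem_roots_charpoly_of_mem_commutator
    {A : G →* LinearMap.GeneralLinearGroup E V} {B T : LinearMap.GeneralLinearGroup E V}
    (hcomm : ∀ g, Commute (A g) B) {g : G} (hg : g ∈ commutator G)
    (hconj : T⁻¹ * B * T = A g * B) {x : E} (hx : x ∈ (A g).val.charpoly.roots) :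
    IsOfFinOrder x := by
  by_contra hfin
  have hx0 : x ≠ 0 := by
    rintro rfl
    have : IsUnit (0 : E) := by
      rw [← Multiset.prod_eq_zero hx, prod_roots_charpoly]
      exact (A g).isUnit.map LinearMap.det
    exact not_isUnit_zero this
  obtain ⟨l, hl, hlx⟩ := exists_isLogarithm_ne_zero hx0 hfin
  have hcomm' (h : G) : Commute (A h).val B.val := congr_arg Units.val (hcomm h)
  have hmul : secondMoment l ((A g).val * B.val) =
      secondMoment l (A g).val + secondMoment l B.val :=
    secondMoment_mul hl (hcomm' g) B.isUnit fun b ↦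
      det_restrict_eq_one_of_mem_commutator ((Units.coeHom _).comp A)
        (fun h ↦ End.mapsTo_maxGenEigenspace_of_comm (hcomm' h).symm b) hg
  have hconj' : secondMoment l ((A g).val * B.val) = secondMoment l B.val := by
    rw [← Units.val_mul, ← hconj]
    have := LinearEquiv.charpoly_conj
      (LinearMap.GeneralLinearGroup.generalLinearEquiv _ _ T⁻¹) B.val
    rw [secondMoment, secondMoment, ← this]
    rfl
  exact hlx (eq_zero_of_secondMoment_eq_zero (by linarith) hx)

end TorsionEigenvalues

section Unipotent

variable {E V : Type*} [Field E] [AddCommGroup V] [Module E V] [FiniteDimensional E V]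

lemma exists_isNilpotent_pow_sub_one [IsAlgClosed E] {T : End E V}
    (hT : ∀ x ∈ T.charpoly.roots, IsOfFinOrder x) : ∃ m, 0 < m ∧ IsNilpotent (T ^ m - 1) := by
  classical
  let m := ∏ x ∈ T.charpoly.roots.toFinset, orderOf x
  have hdvd : ∀ a ∈ T.charpoly.roots, X - C a ∣ (X ^ m - 1 : E[X]) := fun a ha ↦ by
    have ham : orderOf a ∣ m := Finset.dvd_prod_of_mem orderOf (Multiset.mem_toFinset.2 ha)
    simp [dvd_iff_isRoot, orderOf_dvd_iff_pow_eq_one.1 ham]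
  have hprod : T.charpoly ∣ (X ^ m - 1) ^ T.charpoly.roots.card := by
    have := Multiset.prod_dvd_prod_of_dvd _ (fun _ ↦ (X ^ m - 1 : E[X])) hdvd
    rwa [← (IsAlgClosed.splits _).eq_prod_roots_of_monic T.charpoly_monic, Multiset.map_const',
      Multiset.prod_replicate] at this
  refine ⟨m, Finset.prod_pos fun x hx ↦ (hT x (Multiset.mem_toFinset.1 hx)).orderOf_pos,
    T.charpoly.roots.card, ?_⟩
  simpa using aeval_eq_zero_of_dvd_aeval_eq_zero hprod T.aeval_self_charpoly

lemma pow_char_pow_eq_one {R : Type*} [Ring R] (p : ℕ) [Fact p.Prime] [CharP R p] {x : R} {k : ℕ}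
    (hx : (x - 1) ^ k = 0) : x ^ p ^ k = 1 := by
  have := sub_pow_char_pow_of_commute p k (Commute.one_right x)
  rwa [one_pow, pow_eq_zero_of_le (Nat.lt_pow_self (Fact.out : p.Prime).one_lt).le hx, eq_comm,
    sub_eq_zero] at this

lemma isOfFinOrder_of_roots_charpoly_of_charP [IsAlgClosed E] (p : ℕ) [Fact p.Prime] [CharP E p]
    {T : End E V} (hT : ∀ x ∈ T.charpoly.roots, IsOfFinOrder x) : IsOfFinOrder T := by
  rcases subsingleton_or_nontrivial V with _ | _
  · rw [Subsingleton.elim T 1]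
    exact .one
  have : CharP (End E V) p := charP_of_injective_algebraMap (algebraMap E (End E V)).injective p
  obtain ⟨m, hm, k, hk⟩ := exists_isNilpotent_pow_sub_one hT
  refine isOfFinOrder_iff_pow_eq_one.2 ⟨m * p ^ k, ?_, ?_⟩
  · exact Nat.mul_pos hm (pow_pos (Fact.out : p.Prime).pos k)
  · rw [pow_mul, pow_char_pow_eq_one p hk]

end Unipotent

section TraceConstant

lemma apply_eq_apply_zero_of_fwdDiff_iter_eq_zero {F : Type*} [NormedAddCommGroup F]
    [NormedSpace ℝ F] {c : ℕ → F} {C : ℝ} (hc : ∀ k, ‖c k‖ ≤ C) {N : ℕ}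
    (hN : (fwdDiff 1)^[N] c = 0) (k : ℕ) :
    c k = c 0 := by
  induction N generalizing c C k with
  | zero => simp [show c = 0 from hN]
  | succ N ih =>
    have hdist (j : ℕ) : ‖c j - c 0‖ ≤ C + C := (norm_sub_le _ _).trans (add_le_add (hc _) (hc _))
    set δ := fwdDiff 1 c 0
    have hΔ : ∀ j, fwdDiff 1 c j = δ :=
      ih (fun j ↦ (norm_sub_le _ _).trans (add_le_add (hc _) (hc _))) hN
    have hlin (j : ℕ) : c j - c 0 = j • δ := by
      induction j with
      | zero => simp
      | succ j ihj => rw [succ_nsmul, ← ihj, ← hΔ j, fwdDiff, sub_add_sub_cancel']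
    have hδ : ‖δ‖ = 0 := by
      by_contra hne
      obtain ⟨j, hj⟩ := Archimedean.arch (C + C + 1) (lt_of_le_of_ne (norm_nonneg δ) (Ne.symm hne))
      rw [← RCLike.norm_nsmul ℝ, ← hlin] at hj
      linarith [hdist j]
    simpa [norm_eq_zero.1 hδ, sub_eq_zero] using hlin k

lemma fwdDiff_iter_comp {M A B : Type*} [AddCommMonoid M] [AddCommGroup A] [AddCommGroup B]
    (f : A →+ B) (h : M) (c : M → A) (n : ℕ) :
    (fwdDiff h)^[n] (f ∘ c) = f ∘ (fwdDiff h)^[n] c := by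
  induction n with
  | zero => rfl
  | succ n ih =>
    ext k
    simp only [Function.iterate_succ_apply', ih, fwdDiff, comp_apply, map_sub]

lemma fwdDiff_iter_pow {R : Type*} [Ring R] (u : R) (n k : ℕ) :
    (fwdDiff 1)^[n] (u ^ ·) k = (u - 1) ^ n * u ^ k := by
  induction n generalizing k with
  | zero => simp
  | succ n ih =>
    rw [Function.iterate_succ_apply', fwdDiff, ih, ih, ← mul_sub, pow_succ (u - 1), mul_assoc,
      sub_one_mul, pow_succ']

lemma norm_multiset_sum_le_card {s : Multiset ℂ} (hs : ∀ x ∈ s, IsOfFinOrder x) :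
    ‖s.sum‖ ≤ s.card := by
  refine (norm_multiset_sum_le s).trans ?_
  have hle : ∀ y ∈ s.map norm, y ≤ 1 := by
    simp only [Multiset.mem_map, forall_exists_index, and_imp, forall_apply_eq_imp_iff₂]
    exact fun x hx ↦ (hs x hx).norm_eq_one.le
  simpa using Multiset.sum_le_card_nsmul _ 1 hle

-- The sums lie in `algebraicClosure ℚ E`, and every embedding of that field in `ℂ` bounds them.
lemma sum_eq_sum_zero_of_fwdDiff_iter_eq_zero {E : Type*} [Field E] [CharZero E]
    {s : ℕ → Multiset E} {d : ℕ} (hcard : ∀ k, (s k).card ≤ d)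
    (hs : ∀ k, ∀ x ∈ s k, IsOfFinOrder x) {N : ℕ}
    (hN : (fwdDiff 1)^[N] (fun k ↦ (s k).sum) = 0) (k : ℕ) : (s k).sum = (s 0).sum := by
  let F := algebraicClosure ℚ E
  have : Algebra.IsAlgebraic ℚ F := algebraicClosure.isAlgebraic ℚ E
  let σ : F →ₐ[ℚ] ℂ := IsAlgClosed.lift
  have hF (k) : ∀ x ∈ s k, x ∈ F := fun x hx ↦ by
    obtain ⟨m, hm, hxm⟩ := isOfFinOrder_iff_pow_eq_one.1 (hs k x hx)
    exact mem_algebraicClosure_iff.2 (IsIntegral.of_pow hm (hxm ▸ isIntegral_one)).isAlgebraic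
  choose t ht using fun k ↦ CanLift.prf (β := Multiset F) (s k) (hF k)
  have hsum (k) : ((t k).sum : E) = (s k).sum := by
    rw [← ht k]; exact map_multiset_sum F.val _
  have hnorm (k) : ‖σ (t k).sum‖ ≤ d := by
    have hfin : ∀ x ∈ (t k).map σ, IsOfFinOrder x := by
      simp only [Multiset.mem_map, forall_exists_index, and_imp, forall_apply_eq_imp_iff₂]
      intro x hx
      have hx' : IsOfFinOrder (x : E) := hs k x (ht k ▸ Multiset.mem_map_of_mem _ hx)
      exact (σ : F →* ℂ).isOfFinOrder
        ((F.val.injective.isOfFinOrder_iff (f := (F.val : F →* E))).1 hx')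
    rw [map_multiset_sum]
    refine (norm_multiset_sum_le_card hfin).trans ?_
    rw [Multiset.card_map, ← Multiset.card_map Subtype.val, ht]
    exact_mod_cast hcard k
  have hNt : (fwdDiff 1)^[N] (fun k ↦ (t k).sum) = 0 := by
    have h := fwdDiff_iter_comp (F.val : F →+ E) 1 (fun k ↦ (t k).sum) N
    rw [show ⇑(F.val : F →+ E) ∘ (fun k ↦ (t k).sum) = fun k ↦ (s k).sum from funext hsum, hN] at h
    exact funext fun k ↦ F.val.injective (congr_fun h k).symm
  have hNσ : (fwdDiff 1)^[N] (fun k ↦ σ (t k).sum) = 0 := by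
    refine (fwdDiff_iter_comp (σ : F →+ ℂ) 1 (fun k ↦ (t k).sum) N).trans ?_
    rw [hNt]
    exact funext fun _ ↦ map_zero σ
  rw [← hsum, ← hsum, σ.injective (apply_eq_apply_zero_of_fwdDiff_iter_eq_zero hnorm hNσ k)]

lemma trace_mul_eq_of_isNilpotent_sub_one {E V : Type*} [Field E] [IsAlgClosed E] [CharZero E]
    [AddCommGroup V] [Module E V] [FiniteDimensional E V] {u s : End E V}
    (hu : IsNilpotent (u - 1)) (hs : ∀ k, ∀ x ∈ (u ^ k * s).charpoly.roots, IsOfFinOrder x) :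
    LinearMap.trace E V (u * s) = LinearMap.trace E V s := by
  obtain ⟨N, hN⟩ := hu
  have htrace (T : End E V) : LinearMap.trace E V T = T.charpoly.roots.sum :=
    End.trace_eq_sum_roots_charpoly_of_splits (IsAlgClosed.splits _)
  have hdiff : (fwdDiff 1)^[N] (fun k ↦ LinearMap.trace E V (u ^ k * s)) = 0 := by
    let f : End E V →+ E := (LinearMap.trace E V ∘ₗ LinearMap.mulRight E s).toAddMonoidHom
    refine (fwdDiff_iter_comp f 1 (u ^ ·) N).trans ?_
    ext k
    rw [comp_apply, fwdDiff_iter_pow, hN, zero_mul, map_zero, Pi.zero_apply]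
  simp only [htrace] at hdiff
  have := sum_eq_sum_zero_of_fwdDiff_iter_eq_zero
    (fun k ↦ (card_roots_charpoly (u ^ k * s)).le) hs hdiff 1
  simpa only [← htrace, pow_zero, pow_one, one_mul] using this

end TraceConstant

section Kolchin

lemma isNilpotent_of_trace_pow_eq_zero {E V : Type*} [Field E] [CharZero E] [AddCommGroup V]
    [Module E V] [FiniteDimensional E V] {r : End E V}
    (hr : ∀ k, LinearMap.trace E V (r ^ (k + 1)) = 0) : IsNilpotent r := by
  have htrace (p : E[X]) : LinearMap.trace E V (aeval r (X * p)) = 0 := by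
    induction p using Polynomial.induction_on' with
    | add p q hp hq => rw [mul_add, map_add, map_add, hp, hq, add_zero]
    | monomial n a =>
      rw [X_mul_monomial, aeval_monomial, ← Algebra.smul_def, map_smul, hr, smul_zero]
  obtain ⟨q, hq, hXq⟩ := exists_eq_pow_rootMultiplicity_mul_and_not_dvd _ r.charpoly_monic.ne_zero 0
  set a := r.charpoly.rootMultiplicity 0
  rw [C_0, sub_zero] at hq hXq
  obtain ⟨s, t, hst⟩ : IsCoprime (X ^ (a + 1)) q :=
    (irreducible_X.coprime_iff_not_dvd.2 hXq).pow_left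
  have hXaq : aeval r (X ^ a * q) = 0 := by rw [← hq, r.aeval_self_charpoly]
  -- `e` is the projection onto the sum of the generalized eigenspaces for nonzero eigenvalues.
  set e := aeval r (X * (s * X ^ a)) with he
  have hadd : e + aeval r (t * q) = 1 := by
    rw [he, ← map_add, mul_left_comm, ← pow_succ', hst, map_one]
  have hmul : e * aeval r (t * q) = 0 := by
    rw [he, ← map_mul, show X * (s * X ^ a) * (t * q) = s * t * X * (X ^ a * q) by ring, map_mul,
      hXaq, mul_zero]
  have hidem : IsIdempotentElem e := by
    rw [eq_sub_of_add_eq' hadd, mul_sub, mul_one, sub_eq_zero] at hmul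
    exact hmul.symm
  have he0 : e = 0 := LinearMap.IsIdempotentElem.eq_zero_of_trace_eq_zero hidem (htrace _)
  rw [he0, zero_add] at hadd
  refine ⟨a, ?_⟩
  calc r ^ a
    _ = aeval r (X ^ a : E[X]) * aeval r (t * q) := by rw [hadd, mul_one, aeval_X_pow]
    _ = aeval r t * aeval r (X ^ a * q) := by rw [← map_mul, mul_left_comm, map_mul]
    _ = 0 := by rw [hXaq, mul_zero]

lemma groupIsNilpotent_of_sub_one_mem_ideal {G S : Type*} [Group G] [Ring S] {f : G →* S}
    (hf : Injective f) {J : Ideal S} [J.IsTwoSided] (hJ : IsNilpotent J)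
    (hfJ : ∀ g, f g - 1 ∈ J) : Group.IsNilpotent G := by
  let H (k : ℕ) : Subgroup G := ((Ideal.Quotient.mk (J ^ k) : S →* S ⧸ J ^ k).comp f).ker
  have mem_H {k : ℕ} {g : G} : g ∈ H k ↔ f g - 1 ∈ J ^ k := Ideal.Quotient.eq
  have hcomm (x g : G) :
      f ⁅x, g⁆ - 1 = ((f x - 1) * (f g - 1) - (f g - 1) * (f x - 1)) * f (x⁻¹ * g⁻¹) := by
    have hxg : f x * f g * f (x⁻¹ * g⁻¹) = f ⁅x, g⁆ := by
      rw [← map_mul, ← map_mul, commutatorElement_def, mul_assoc _ x⁻¹]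
    have hgx : f g * f x * f (x⁻¹ * g⁻¹) = 1 := by
      rw [← map_mul, ← map_mul, ← mul_inv_rev, mul_inv_cancel, map_one]
    calc f ⁅x, g⁆ - 1
      _ = (f x * f g - f g * f x) * f (x⁻¹ * g⁻¹) := by rw [sub_mul, hxg, hgx]
      _ = ((f x - 1) * (f g - 1) - (f g - 1) * (f x - 1)) * f (x⁻¹ * g⁻¹) := by
        congr 1
        noncomm_ring
  obtain ⟨n, hn⟩ := hJ
  refine Subgroup.nilpotent_iff_finite_descending_central_series G |>.2 ⟨n, H, ⟨?_, ?_⟩, ?_⟩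
  · refine eq_top_iff.2 fun g _ ↦ mem_H.2 ?_
    rw [Submodule.pow_zero, Ideal.one_eq_top]
    exact Submodule.mem_top
  · intro x k hx g
    rw [mem_H] at hx ⊢
    rw [hcomm]
    refine Ideal.mul_mem_right _ _ (Submodule.sub_mem _ ?_ ?_)
    · exact Submodule.pow_succ (M := J) ▸ Ideal.mul_mem_mul hx (hfJ g)
    · exact (Ideal.IsTwoSided.pow_succ (I := J) k).symm ▸ Ideal.mul_mem_mul (hfJ g) hx
  · rw [eq_bot_iff]
    intro g hg
    rw [mem_H, hn] at hg
    exact hf (by simpa [sub_eq_zero] using hg)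

variable {E V : Type*} [Field E] [CharZero E] [AddCommGroup V] [Module E V] [FiniteDimensional E V]

lemma mem_jacobson_bot_of_trace_mul_eq_zero {S : Subalgebra E (End E V)} {x : S}
    (hx : ∀ s : S, LinearMap.trace E V (x * s) = 0) : x ∈ (⊥ : Ideal S).jacobson := by
  refine Ideal.mem_jacobson_iff.2 fun y ↦ ?_
  have hnil : IsNilpotent (y * x : End E V) := isNilpotent_of_trace_pow_eq_zero fun k ↦ by
    rw [pow_succ, ← mul_assoc, LinearMap.trace_mul_comm]
    exact hx ((y * x) ^ k * y)
  have hnilS : IsNilpotent (y * x) := (IsNilpotent.map_iff S.subtype_injective).1 hnil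
  obtain ⟨z, hz⟩ := hnilS.isUnit_add_one
  refine ⟨(z⁻¹ : Sˣ), ?_⟩
  rw [mul_assoc, ← mul_add_one, ← hz, Units.inv_mul, sub_self]
  exact Submodule.zero_mem _

theorem groupIsNilpotent_of_trace_eq_trace_one {G : Type*} [Group G]
    {ρ : G →* LinearMap.GeneralLinearGroup E V} (hρ : Injective ρ)
    (htrace : ∀ g, LinearMap.trace E V (ρ g).val = LinearMap.trace E V 1) :
    Group.IsNilpotent G := by
  let φ : G →* End E V := (Units.coeHom _).comp ρ
  let S : Subalgebra E (End E V) := Algebra.adjoin E (MonoidHom.mrange φ)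
  let f : G →* S := φ.codRestrict S fun g ↦ Algebra.subset_adjoin ⟨g, rfl⟩
  have hf : Injective f := fun g h hgh ↦ hρ (Units.ext congr($hgh))
  have htrace_mul (g : G) {s : End E V} (hs : s ∈ S) :
      LinearMap.trace E V ((φ g - 1) * s) = 0 := by
    rw [← Subalgebra.mem_toSubmodule, Algebra.adjoin_eq_span, Submonoid.closure_eq] at hs
    induction hs using Submodule.span_induction with
    | mem x hx =>
      obtain ⟨h, rfl⟩ := hx
      rw [sub_one_mul, ← map_mul, map_sub]
      exact sub_eq_zero.2 ((htrace (g * h)).trans (htrace h).symm)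
    | zero => rw [mul_zero, map_zero]
    | add x y _ _ hx hy => rw [mul_add, map_add, hx, hy, add_zero]
    | smul a x _ hx => rw [mul_smul_comm, map_smul, hx, smul_zero]
  have : IsArtinianRing S := .of_finite E S
  exact groupIsNilpotent_of_sub_one_mem_ideal hf IsArtinianRing.isNilpotent_jacobson_bot fun g ↦
    mem_jacobson_bot_of_trace_mul_eq_zero fun s ↦ htrace_mul g s.2

end Kolchin

section FreeGroups

-- If `w` is reduced with first letter `x^±1`, then for `b ≠ x` and the sign `ε` of the last letter
-- of `w` both `b^ε w` and `w b^ε` are reduced, and they have different first letters.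
lemma center_freeGroup_eq_bot {α : Type*} [Nontrivial α] :
    Subgroup.center (FreeGroup α) = ⊥ := by
  classical
  refine (Subgroup.eq_bot_iff_forall _).2 fun w hw ↦ ?_
  by_contra hw1
  have hne : w.toWord ≠ [] := mt FreeGroup.toWord_eq_nil_iff.1 hw1
  obtain ⟨b, hb⟩ := exists_ne (w.toWord.head hne).1
  set c : α × Bool := (b, (w.toWord.getLast hne).2)
  have hleft : FreeGroup.IsReduced (c :: w.toWord) :=
    List.isChain_cons.2 ⟨fun y hy h ↦ by
      rw [List.head?_eq_some_head hne, Option.mem_some_iff] at hy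
      exact absurd (hy ▸ h) hb, FreeGroup.isReduced_toWord⟩
  have hright : FreeGroup.IsReduced (w.toWord ++ [c]) :=
    List.isChain_append.2 ⟨w.isReduced_toWord, List.isChain_singleton _, fun x hx y hy _ ↦ by
      rw [List.getLast?_eq_some_getLast hne, Option.mem_some_iff] at hx
      rw [List.head?_cons, Option.mem_some_iff] at hy
      rw [← hx, ← hy]⟩
  have hcomm : FreeGroup.mk [c] * w = w * FreeGroup.mk [c] := Subgroup.mem_center_iff.1 hw _
  have hwords : c :: w.toWord = w.toWord ++ [c] := by
    have h := congr(FreeGroup.toWord $hcomm)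
    rwa [FreeGroup.toWord_mul, FreeGroup.toWord_mul, FreeGroup.toWord_mk,
      FreeGroup.reduce_singleton, List.singleton_append, hleft.reduce_eq, hright.reduce_eq] at h
  refine hb ?_
  have := congr(List.head? $hwords)
  rw [List.head?_cons, List.head?_append_of_ne_nil _ hne, List.head?_eq_some_head hne] at this
  rw [← Option.some_injective _ this]

variable {Γ : Type*} [Group Γ] [IsFreeGroup Γ]

lemma commute_of_center_ne_bot (hΓ : Subgroup.center Γ ≠ ⊥) (a b : Γ) : Commute a b := by
  let e : Γ ≃* FreeGroup (IsFreeGroup.Generators Γ) := IsFreeGroup.toFreeGroup Γ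
  rcases subsingleton_or_nontrivial (IsFreeGroup.Generators Γ) with _ | _
  · have : IsCyclic (FreeGroup (IsFreeGroup.Generators Γ)) := by
      cases isEmpty_or_nonempty (IsFreeGroup.Generators Γ)
      · infer_instance
      · have := uniqueOfSubsingleton (Classical.arbitrary (IsFreeGroup.Generators Γ))
        infer_instance
    have := e.isCyclic.2 this
    exact mul_comm' a b
  · refine absurd ((Subgroup.eq_bot_iff_forall _).2 fun g hg ↦ e.injective ?_) hΓ
    have heg : e g ∈ Subgroup.center (FreeGroup (IsFreeGroup.Generators Γ)) :=
      (Subgroup.centerCongr e ⟨g, hg⟩).2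
    rwa [center_freeGroup_eq_bot, Subgroup.mem_bot, ← map_one e] at heg

lemma commute_of_groupIsNilpotent [Group.IsNilpotent Γ] (a b : Γ) : Commute a b := by
  rcases subsingleton_or_nontrivial Γ with _ | _
  · exact Subsingleton.elim _ _
  · exact commute_of_center_ne_bot (Group.IsNilpotent.center_ne_bot Γ) a b

lemma commute_trans {a b c : Γ} (hb : b ≠ 1) (hab : Commute a b) (hbc : Commute b c) :
    Commute a c := by
  let Z := Subgroup.centralizer {b}
  have ha : a ∈ Z := Subgroup.mem_centralizer_singleton_iff.2 hab
  have hb' : b ∈ Z := Subgroup.mem_centralizer_singleton_iff.2 rfl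
  have hc : c ∈ Z := Subgroup.mem_centralizer_singleton_iff.2 hbc.symm
  have hbZ : (⟨b, hb'⟩ : Z) ∈ Subgroup.center Z := Subgroup.mem_center_iff.2 fun z ↦
    Subtype.ext (Subgroup.mem_centralizer_singleton_iff.1 z.2)
  have hZ : Subgroup.center Z ≠ ⊥ := fun h ↦ by
    rw [h, Subgroup.mem_bot] at hbZ
    exact hb congr(Subtype.val $hbZ)
  exact congr_arg Subtype.val (commute_of_center_ne_bot hZ ⟨a, ha⟩ ⟨c, hc⟩)

lemma isMulTorsionFree_of_isFreeGroup : IsMulTorsionFree Γ :=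
  Injective.isMulTorsionFree (IsFreeGroup.toFreeGroup Γ).toMonoidHom
    (IsFreeGroup.toFreeGroup Γ).injective

end FreeGroups

lemma exists_not_commute_of_mem_commutator {α : Type*} [Nontrivial α] :
    ∃ a ∈ commutator (FreeGroup α), ∃ b ∈ commutator (FreeGroup α), ¬ Commute a b := by
  classical
  obtain ⟨x, y, hxy⟩ := exists_pair_ne α
  let X := FreeGroup.of x
  let Y := FreeGroup.of y
  have hXY : ⁅X, Y⁆ ∈ commutator (FreeGroup α) :=
    Subgroup.commutator_mem_commutator (Subgroup.mem_top _) (Subgroup.mem_top _)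
  refine ⟨⁅X, Y⁆, hXY, X * ⁅X, Y⁆ * X⁻¹, Subgroup.Normal.conj_mem inferInstance _ hXY X, fun h ↦ ?_⟩
  let f : FreeGroup α →* Equiv.Perm (Fin 4) :=
    FreeGroup.lift fun i ↦ if i = x then finRotate 4 else Equiv.swap 0 1
  have hf := h.map f
  simp only [map_mul, map_inv, map_commutatorElement, f, X, Y, FreeGroup.lift_apply_of, if_pos,
    hxy.symm, if_false] at hf
  revert hf
  unfold Commute SemiconjBy
  decide

section FaithfulFree

variable {E V Γ : Type*} [Field E] [IsAlgClosed E] [AddCommGroup V] [Module E V]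
  [FiniteDimensional E V] [Group Γ] [IsFreeGroup Γ] {ρ : Γ →* LinearMap.GeneralLinearGroup E V}

lemma commute_of_isNilpotent_sub_one [CharZero E] (hρ : Injective ρ)
    (hfin : ∀ g, ∀ x ∈ (ρ g).val.charpoly.roots, IsOfFinOrder x) {u v : Γ}
    (hu : IsNilpotent ((ρ u).val - 1)) (hv : IsNilpotent ((ρ v).val - 1)) : Commute u v := by
  let Δ := Subgroup.closure {u, v}
  have htrace {g : Γ} (hg : g ∈ Δ) (s : Γ) :
      LinearMap.trace E V (ρ (g * s)).val = LinearMap.trace E V (ρ s).val := by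
    induction hg using Subgroup.closure_induction generalizing s with
    | mem g hg =>
      have hnil : IsNilpotent ((ρ g).val - 1) := by
        rcases hg with rfl | rfl
        exacts [hu, hv]
      rw [map_mul, Units.val_mul]
      refine trace_mul_eq_of_isNilpotent_sub_one hnil fun k ↦ ?_
      simpa only [map_mul, map_pow, Units.val_mul, Units.val_pow_eq_pow_val] using hfin (g ^ k * s)
    | one => rw [one_mul]
    | mul g h _ _ hg hh => rw [mul_assoc, hg, hh]
    | inv g _ hg => rw [← hg (g⁻¹ * s), mul_inv_cancel_left]
  have : Group.IsNilpotent Δ :=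
    groupIsNilpotent_of_trace_eq_trace_one (ρ := ρ.comp Δ.subtype) (hρ.comp Subtype.val_injective)
      fun g ↦ by simpa using htrace g.2 1
  exact congr_arg Subtype.val <| commute_of_groupIsNilpotent (Γ := Δ)
    ⟨u, Subgroup.subset_closure (.inl rfl)⟩ ⟨v, Subgroup.subset_closure (.inr rfl)⟩

theorem commute_of_isOfFinOrder_roots_charpoly (hρ : Injective ρ)
    (hfin : ∀ g, ∀ x ∈ (ρ g).val.charpoly.roots, IsOfFinOrder x) (a b : Γ) : Commute a b := by
  have := isMulTorsionFree_of_isFreeGroup (Γ := Γ)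
  rcases CharP.exists' E with _ | ⟨p, _, _⟩
  · rcases eq_or_ne a 1 with rfl | ha
    · exact .one_left b
    rcases eq_or_ne b 1 with rfl | hb
    · exact .one_right a
    obtain ⟨m, hm, hma⟩ := exists_isNilpotent_pow_sub_one (hfin a)
    obtain ⟨n, hn, hnb⟩ := exists_isNilpotent_pow_sub_one (hfin b)
    have hmn : Commute (a ^ m) (b ^ n) :=
      commute_of_isNilpotent_sub_one hρ hfin (by simpa using hma) (by simpa using hnb)
    have ham : Commute a (b ^ n) :=
      commute_trans (mt (pow_eq_one_iff_left hm.ne').1 ha) (.self_pow a m) hmn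
    exact commute_trans (mt (pow_eq_one_iff_left hn.ne').1 hb) ham (.pow_self b n)
  · have htriv (g : Γ) : g = 1 := by
      have hg : IsOfFinOrder (ρ g) :=
        Units.isOfFinOrder_val.1 (isOfFinOrder_of_roots_charpoly_of_charP p (hfin g))
      exact (isOfFinOrder_iff_eq_one g).1 (hρ.isOfFinOrder_iff.1 hg)
    rw [htriv a]
    exact .one_left b

end FaithfulFree

section Automorphisms

variable {β : Type*}

/-- The endomorphism of `FreeGroup (Option β)` multiplying the letter `none` on the right by the
word `g` in the other letters, which it fixes. -/
def transvectionHom (g : FreeGroup β) : FreeGroup (Option β) →* FreeGroup (Option β) :=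
  FreeGroup.lift fun i ↦ i.elim (.of none * .map some g) fun j ↦ .of (some j)

lemma transvectionHom_of_none (g : FreeGroup β) :
    transvectionHom g (.of none) = .of none * .map some g :=
  FreeGroup.lift_apply_of

lemma transvectionHom_of_some (g : FreeGroup β) (j : β) :
    transvectionHom g (.of (some j)) = .of (some j) :=
  FreeGroup.lift_apply_of

lemma transvectionHom_map_some (g h : FreeGroup β) :
    transvectionHom g (.map some h) = .map some h := by
  have : (transvectionHom g).comp (FreeGroup.map some) = FreeGroup.map some :=
    FreeGroup.ext_hom _ _ fun j ↦ by simp [transvectionHom_of_some]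
  exact congr($this h)

lemma transvectionHom_one : transvectionHom (1 : FreeGroup β) = .id _ :=
  FreeGroup.ext_hom _ _ fun i ↦ by cases i <;> simp [transvectionHom]

lemma transvectionHom_mul (g h : FreeGroup β) :
    transvectionHom (g * h) = (transvectionHom g).comp (transvectionHom h) :=
  FreeGroup.ext_hom _ _ fun i ↦ by
    cases i <;> simp [transvectionHom_of_none, transvectionHom_of_some, transvectionHom_map_some,
      mul_assoc]

/-- The automorphisms of `FreeGroup (Option β)` multiplying the letter `none` on the right by a
word in the other letters and fixing these. -/
def transvection : FreeGroup β →* MulAut (FreeGroup (Option β)) where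
  toFun g := (transvectionHom g).toMulEquiv (transvectionHom g⁻¹)
    (by rw [← transvectionHom_mul, inv_mul_cancel, transvectionHom_one])
    (by rw [← transvectionHom_mul, mul_inv_cancel, transvectionHom_one])
  map_one' := MulEquiv.ext fun x ↦ congr($transvectionHom_one x)
  map_mul' g h := MulEquiv.ext fun x ↦ congr($(transvectionHom_mul g h) x)

lemma mulAut_conj_injective {G : Type*} [Group G] (hG : Subgroup.center G = ⊥) :
    Injective (MulAut.conj : G →* MulAut G) := by
  refine (injective_iff_map_eq_one _).2 fun g hg ↦ ?_
  rw [← Subgroup.mem_bot, ← hG, Subgroup.mem_center_iff]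
  exact fun x ↦ (mul_inv_eq_iff_eq_mul.1 congr($hg x)).symm

lemma mul_mulAut_conj {G : Type*} [Group G] (φ : MulAut G) (g : G) :
    φ * MulAut.conj g = MulAut.conj (φ g) * φ := by
  ext x
  simp

lemma commute_conj_transvection (g h : FreeGroup β) :
    Commute (MulAut.conj (FreeGroup.map some g)) (transvection h) := by
  have hg : transvection h (.map some g) = .map some g := transvectionHom_map_some h g
  exact .symm <| (mul_mulAut_conj _ _).trans (by rw [hg])

lemma conj_of_none_inv_mul_transvection_mul (g : FreeGroup β) :
    (MulAut.conj (.of none))⁻¹ * transvection g * MulAut.conj (.of none) =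
      MulAut.conj (FreeGroup.map some g) * transvection g := by
  have hnone : transvection g (.of none) = .of none * .map some g := transvectionHom_of_none g
  rw [mul_assoc, mul_mulAut_conj, hnone, map_mul, mul_assoc, inv_mul_cancel_left]

theorem not_injective_mulAut_freeGroup_option [Nontrivial β] {E V : Type*} [Field E]
    [IsAlgClosed E] [AddCommGroup V] [Module E V] [FiniteDimensional E V]
    (R : MulAut (FreeGroup (Option β)) →* LinearMap.GeneralLinearGroup E V) : ¬ Injective R := by
  intro hR
  let A := R.comp (MulAut.conj.comp (FreeGroup.map some))
  let B := R.comp transvection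
  have hcomm (g h : FreeGroup β) : Commute (A g) (B h) :=
    (commute_conj_transvection g h).map R
  have hconj (g : FreeGroup β) :
      (R (MulAut.conj (.of none)))⁻¹ * B g * R (MulAut.conj (.of none)) = A g * B g := by
    simpa [A, B] using congr(R $(conj_of_none_inv_mul_transvection_mul g))
  have hA : Injective A := hR.comp <|
    (mulAut_conj_injective center_freeGroup_eq_bot).comp
      (FreeGroup.map_injective (Option.some_injective β))
  obtain ⟨a, ha, b, hb, hab⟩ := exists_not_commute_of_mem_commutator (α := β)
  have hcommute := commute_of_isOfFinOrder_roots_charpoly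
    (ρ := A.comp (commutator (FreeGroup β)).subtype)
    (hA.comp Subtype.val_injective)
    (fun g _ ↦ isOfFinOrder_of_mem_roots_charpoly_of_mem_commutator (hcomm · g) g.2 (hconj g))
    ⟨a, ha⟩ ⟨b, hb⟩
  exact hab congr(Subtype.val $hcommute)

end Automorphisms

lemma exists_nontrivial_ne_of_three_le_card {α : Type*} (hα : 3 ≤ ENat.card α) :
    ∃ z : α, Nontrivial {b // b ≠ z} := by
  obtain ⟨z⟩ := (ENat.one_le_card_iff_nonempty α).1 ((by norm_num : (1 : ℕ∞) ≤ 3).trans hα)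
  obtain ⟨x, hx, -⟩ := ENat.exists_ne_ne_of_three_le hα z z
  obtain ⟨y, hy, hyx⟩ := ENat.exists_ne_ne_of_three_le hα z x
  exact ⟨z, ⟨y, hy⟩, ⟨x, hx⟩, fun h ↦ hyx congr($h)⟩

lemma generalLinearGroup_map_injective {n R S : Type*} [Fintype n] [DecidableEq n] [CommRing R]
    [CommRing S] {f : R →+* S} (hf : Injective f) :
    Injective (Matrix.GeneralLinearGroup.map (n := n) f) := by
  have hmapMatrix : Injective (f.mapMatrix (m := n)).toMonoidHom := Matrix.map_injective hf
  exact Units.map_injective hmapMatrix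

end FormanekProcesi

theorem not_linear_of_contains_aut_free_general {α : Type*} (hα : 3 ≤ ENat.card α)
    (H : Type*) [Group H] (hH : ∃ j : MulAut (FreeGroup α) →* H, Function.Injective j) :
    ∀ (K : Type*) [Field K] (d : ℕ),
      ¬ ∃ f : H →* Matrix.GeneralLinearGroup (Fin d) K, Function.Injective f := by
  classical
  rintro K _ d ⟨f, hf⟩
  obtain ⟨j, hj⟩ := hH
  obtain ⟨z, _⟩ := FormanekProcesi.exists_nontrivial_ne_of_three_le_card hα
  let e : MulAut (FreeGroup (Option {b // b ≠ z})) ≃* MulAut (FreeGroup α) :=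
    MulAut.congr (FreeGroup.freeGroupCongr (Equiv.optionSubtypeNe z))
  let closureMap := Matrix.GeneralLinearGroup.map (n := Fin d) (algebraMap K (AlgebraicClosure K))
  let toLin := Matrix.GeneralLinearGroup.toLin (n := Fin d) (R := AlgebraicClosure K)
  refine FormanekProcesi.not_injective_mulAut_freeGroup_option
    (toLin.toMonoidHom.comp (closureMap.comp (f.comp (j.comp e.toMonoidHom)))) ?_
  exact toLin.injective.comp <|
    (FormanekProcesi.generalLinearGroup_map_injective (algebraMap K _).injective).comp <|
      hf.comp <| hj.comp e.injective

/-- For `n ≥ 3`, every group `H` containing `Aut(F_n)` is not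
linear: for every field `K` and every `d : ℕ`, there is no injective group
homomorphism `H →* GL_d(K)`. -/
theorem not_linear_of_contains_aut_free {n : ℕ} (hn : 3 ≤ n)
    (H : Type*) [Group H]
    (hH : ∃ j : MulAut (FreeGroup (Fin n)) →* H, Function.Injective j) :
    ∀ (K : Type*) [Field K] (d : ℕ),
      ¬ ∃ f : H →* Matrix.GeneralLinearGroup (Fin d) K, Function.Injective f :=
  not_linear_of_contains_aut_free_general (by simpa using hn) H hH
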